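/- Let f be an expansive homeomorphism with canonical coordinates of a compact metric space (M,d), where 3ξ is an expansivity constant and d is self-similar for f with expanding factor λ > 1 and constant ξ. If f has homogeneous entropy, then ent⁺(W^u_ξ(x)) = ent⁻(W^s_ξ(x)) = (1/2)·ent(M) for all x ∈ M. -/

import Mathlib

open Filter Topology

def Ws {M : Type*} [MetricSpace M] (f : Equiv.Perm M) (eps : ℝ) (x : M) : Set M :=
  {y | ∀ n : ℕ, dist ((f ^ n) x) ((f ^ n) y) ≤ eps}

def Wu {M : Type*} [MetricSpace M] (f : Equiv.Perm M) (eps : ℝ) (x : M) : Set M :=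
  {y | ∀ n : ℕ, dist ((f.symm ^ n) x) ((f.symm ^ n) y) ≤ eps}

/-- Diameter of a set with respect to an arbitrary "metric" `ρ`. -/
noncomputable def rdiam {M : Type*} (ρ : M → M → ℝ) (A : Set M) : ℝ :=
  sSup {r : ℝ | ∃ a ∈ A, ∃ b ∈ A, r = ρ a b}

/-- Minimal cardinality of a finite cover of `X` by sets of `ρ`-diameter `< ε`. -/
noncomputable def covN {M : Type*} (X : Set M) (ρ : M → M → ℝ) (ε : ℝ) : ℕ :=
  sInf {n : ℕ | ∃ U : Fin n → Set M, X ⊆ (⋃ i, U i) ∧ ∀ i, rdiam ρ (U i) < ε}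

/-- `dᶠₙ(x,y) = max_{|k| ≤ n} d(fᵏ x, fᵏ y)`. -/
noncomputable def dFn {M : Type*} [MetricSpace M] (f : Equiv.Perm M) (n : ℕ) (x y : M) : ℝ :=
  sSup {r : ℝ | ∃ k : ℤ, |k| ≤ (n : ℤ) ∧ r = dist ((f ^ k) x) ((f ^ k) y)}

/-- `d⁺ₙ(x,y) = max_{0 ≤ k ≤ n} d(fᵏ x, fᵏ y)`. -/
noncomputable def dPlusn {M : Type*} [MetricSpace M] (f : Equiv.Perm M) (n : ℕ) (x y : M) : ℝ :=
  sSup {r : ℝ | ∃ k : ℕ, k ≤ n ∧ r = dist ((f ^ k) x) ((f ^ k) y)}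

/-- `d⁻ₙ(x,y) = max_{0 ≤ k ≤ n} d(f⁻ᵏ x, f⁻ᵏ y)`. -/
noncomputable def dMinusn {M : Type*} [MetricSpace M] (f : Equiv.Perm M) (n : ℕ) (x y : M) : ℝ :=
  sSup {r : ℝ | ∃ k : ℕ, k ≤ n ∧ r = dist ((f.symm ^ k) x) ((f.symm ^ k) y)}

/-!
Entropy counts the sets needed to cover `X` when they must stay small during a time window. By
uniform expansivity, changing the scale of smallness costs a factor independent of the window. Hence
the two-sided count of `M` at time `n` is comparable to its one-sided count at time `2 * n`, so
forward covers of `M` have growth rate `E / 2`; and on a local unstable set, where backward orbits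
stay close anyway, two-sided and one-sided counts are comparable.

By canonical coordinates, a small ball needs at most a constant times as many sets as the local
unstable set of its centre. Suppose the count of every local unstable set fell below `exp (h * n)`,
`h = E / 2`, by a large factor at some time. Finitely many balls suffice, so these
times are bounded, and covering each piece anew from its own time on yields covers of `M` with a
growth rate smaller than `h`. So some local unstable set has growth rate `h`, and by homogeneity all
of them do. Stable sets are unstable sets of `f⁻¹`.
-/

/-! ### Exponential growth rates -/

/-- `u n` grows like `exp (E * n)`: the limit of `log (u n) / n` exists and equals `E`. Applied to
covering numbers, this says that the entropy of the covered set is `E`. -/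
def HasGrowthRate (u : ℕ → ℝ) (E : ℝ) : Prop :=
  Tendsto (fun n : ℕ ↦ Real.log (u n) / (n : ℝ)) atTop (𝓝 E)

lemma log_div_le_add_log_div {x y K : ℝ} (hx : 0 < x) (hy : 0 < y) (h : x ≤ K * y) (n : ℕ) :
    Real.log x / n ≤ Real.log K / n + Real.log y / n := by
  have hK : 0 < K := pos_of_mul_pos_left (hx.trans_le h) hy.le
  rw [← add_div, ← Real.log_mul hK.ne' hy.ne']
  gcongr

lemma hasGrowthRate_exp (a : ℝ) : HasGrowthRate (fun n ↦ Real.exp (a * n)) a := by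
  refine tendsto_const_nhds.congr' ?_
  filter_upwards [eventually_ne_atTop 0] with n hn
  rw [Real.log_exp, mul_div_cancel_right₀ _ (Nat.cast_ne_zero.2 hn)]

lemma le_exp_sub_one_div_mul {h s : ℝ} {k N : ℕ} (hk : k ≤ N)
    (hs : Real.exp 1 * s ≤ Real.exp (h * k)) : s ≤ Real.exp ((h - 1 / N) * k) := by
  have hle : 1 / (N : ℝ) * k ≤ 1 := by
    rw [one_div_mul_eq_div]
    exact div_le_one_of_le₀ (mod_cast hk) N.cast_nonneg
  calc s ≤ Real.exp (h * k) / Real.exp 1 := (le_div_iff₀' (Real.exp_pos 1)).2 hs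
    _ = Real.exp (h * k - 1) := (Real.exp_sub _ _).symm
    _ ≤ Real.exp ((h - 1 / N) * k) := Real.exp_le_exp.2 (by linarith)

namespace HasGrowthRate

variable {u v w : ℕ → ℝ} {E F K L : ℝ}

lemma add_log_const_div (hu : HasGrowthRate u E) (K : ℝ) :
    Tendsto (fun n : ℕ ↦ Real.log K / n + Real.log (u n) / n) atTop (𝓝 E) := by
  simpa only [zero_add] using (tendsto_const_div_atTop_nhds_zero_nat (Real.log K)).add hu

lemma le_of_le_mul (hu : HasGrowthRate u E) (hv : HasGrowthRate v F) (hu₀ : ∀ n, 0 < u n)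
    (hv₀ : ∀ n, 0 < v n) (h : ∀ n, u n ≤ K * v n) : E ≤ F :=
  le_of_tendsto_of_tendsto' hu (hv.add_log_const_div K) fun n ↦
    log_div_le_add_log_div (hu₀ n) (hv₀ n) (h n) n

lemma squeeze (hu : HasGrowthRate u E) (hw : HasGrowthRate w E) (hu₀ : ∀ n, 0 < u n)
    (hv₀ : ∀ n, 0 < v n) (hw₀ : ∀ n, 0 < w n) (huv : ∀ᶠ n in atTop, u n ≤ K * v n)
    (hvw : ∀ n, v n ≤ L * w n) : HasGrowthRate v E := by
  have hlow : Tendsto (fun n : ℕ ↦ Real.log (u n) / n - Real.log K / n) atTop (𝓝 E) := by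
    simpa only [sub_zero] using hu.sub (tendsto_const_div_atTop_nhds_zero_nat (Real.log K))
  refine tendsto_of_tendsto_of_tendsto_of_le_of_le' hlow (hw.add_log_const_div L) ?_
    (.of_forall fun n ↦ log_div_le_add_log_div (hv₀ n) (hw₀ n) (hvw n) n)
  filter_upwards [huv] with n hn
  exact sub_le_iff_le_add'.2 (log_div_le_add_log_div (hu₀ n) (hv₀ n) hn n)

lemma of_le_mul_of_le_mul (hu : HasGrowthRate u E) (hu₀ : ∀ n, 0 < u n) (hv₀ : ∀ n, 0 < v n)
    (huv : ∀ n, u n ≤ K * v n) (hvu : ∀ n, v n ≤ L * u n) : HasGrowthRate v E :=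
  hu.squeeze hu hu₀ hv₀ hu₀ (.of_forall huv) hvu

lemma comp_of_tendsto_div {m : ℕ → ℕ} {θ : ℝ} (hu : HasGrowthRate u E)
    (hm : Tendsto m atTop atTop) (hθ : Tendsto (fun n : ℕ ↦ (m n : ℝ) / n) atTop (𝓝 θ)) :
    HasGrowthRate (u ∘ m) (E * θ) := by
  refine ((hu.comp hm).mul hθ).congr' ?_
  filter_upwards [hm.eventually_ne_atTop 0] with n hn
  exact div_mul_div_cancel₀ (Nat.cast_ne_zero.2 hn)

lemma comp_half_add (hu : HasGrowthRate u E) (c : ℕ) :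
    HasGrowthRate (fun n ↦ u (n / 2 + c)) (E / 2) := by
  have hfloor : Tendsto (fun n : ℕ ↦ ((n / 2 : ℕ) : ℝ) / n) atTop (𝓝 2⁻¹) := by
    refine ((tendsto_nat_floor_mul_div_atTop (R := ℝ) (a := 2⁻¹) (by positivity)).comp
      tendsto_natCast_atTop_atTop).congr fun n ↦ ?_
    rw [Function.comp_apply, inv_mul_eq_div, Nat.floor_div_ofNat, Nat.floor_natCast]
  have hratio : Tendsto (fun n : ℕ ↦ ((n / 2 + c : ℕ) : ℝ) / n) atTop (𝓝 2⁻¹) := by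
    simpa only [Nat.cast_add, add_div, add_zero] using
      hfloor.add (tendsto_const_div_atTop_nhds_zero_nat (c : ℝ))
  exact hu.comp_of_tendsto_div (tendsto_atTop.2 fun b ↦ (eventually_ge_atTop (2 * b)).mono
    fun n hn ↦ by omega) hratio

end HasGrowthRate

/-! ### Covers by sets with a given property -/

/-- `X` is covered by at most `b` sets satisfying `P`. The bound `b` is real so that it can be an
exponential. -/
def CoverBy {M : Type*} (P : Set M → Prop) (X : Set M) (b : ℝ) : Prop :=
  ∃ S : Finset (Set M), (S.card : ℝ) ≤ b ∧ (∀ x ∈ X, ∃ A ∈ S, x ∈ A) ∧ ∀ A ∈ S, P A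

namespace CoverBy

variable {M : Type*} {P Q R : Set M → Prop} {X Y : Set M} {b c ε : ℝ} {ρ : M → M → ℝ}

lemma pos (h : CoverBy P X b) (hX : X.Nonempty) : 0 < b := by
  obtain ⟨S, hSb, hSX, -⟩ := h
  obtain ⟨A, hA, -⟩ := hSX _ hX.some_mem
  exact lt_of_lt_of_le (mod_cast Finset.card_pos.2 ⟨A, hA⟩) hSb

lemma bound_mono (h : CoverBy P X b) (hbc : b ≤ c) : CoverBy P X c :=
  let ⟨S, hSb, hSX⟩ := h
  ⟨S, hSb.trans hbc, hSX⟩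

lemma imp (h : CoverBy P X b) (hPQ : ∀ A, P A → Q A) : CoverBy Q X b :=
  let ⟨S, hSb, hSX, hSP⟩ := h
  ⟨S, hSb, hSX, fun A hA ↦ hPQ A (hSP A hA)⟩

lemma subset (h : CoverBy P X b) (hYX : Y ⊆ X) : CoverBy P Y b :=
  let ⟨S, hSb, hSX, hSP⟩ := h
  ⟨S, hSb, fun y hy ↦ hSX y (hYX hy), hSP⟩

lemma map (h : CoverBy P X b) (g : Set M → Set M) (hg : ∀ A, P A → Q (g A))
    (hY : ∀ y ∈ Y, ∃ x ∈ X, ∀ A, x ∈ A → y ∈ g A) : CoverBy Q Y b := by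
  classical
  obtain ⟨S, hSb, hSX, hSP⟩ := h
  refine ⟨S.image g, le_trans (mod_cast Finset.card_image_le) hSb, fun y hy ↦ ?_,
    Finset.forall_mem_image.2 fun A hA ↦ hg A (hSP A hA)⟩
  obtain ⟨x, hx, hxy⟩ := hY y hy
  obtain ⟨A, hA, hxA⟩ := hSX x hx
  exact ⟨g A, Finset.mem_image_of_mem g hA, hxy A hxA⟩

lemma restrict (h : CoverBy P X b) (hPQ : ∀ A, P A → Q (X ∩ A)) : CoverBy Q X b :=
  h.map (X ∩ ·) hPQ fun y hy ↦ ⟨y, hy, fun _ hA ↦ ⟨hy, hA⟩⟩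

lemma inter (hP : CoverBy P X b) (hQ : CoverBy Q X c) (hR : ∀ A B, P A → Q B → R (A ∩ B)) :
    CoverBy R X (b * c) := by
  classical
  obtain ⟨S, hSb, hSX, hSP⟩ := hP
  obtain ⟨T, hTc, hTX, hTQ⟩ := hQ
  refine ⟨Finset.image₂ (· ∩ ·) S T, ?_, fun x hx ↦ ?_,
    Finset.forall_mem_image₂.2 fun A hA B hB ↦ hR A B (hSP A hA) (hTQ B hB)⟩
  · calc ((Finset.image₂ (· ∩ ·) S T).card : ℝ) ≤ S.card * T.card :=
          mod_cast Finset.card_image₂_le _ S T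
      _ ≤ b * c := by gcongr; exact S.card.cast_nonneg.trans hSb
  · obtain ⟨A, hA, hxA⟩ := hSX x hx
    obtain ⟨B, hB, hxB⟩ := hTX x hx
    exact ⟨A ∩ B, Finset.mem_image₂_of_mem hA hB, hxA, hxB⟩

lemma trans (h : CoverBy P X b) (hc : 0 ≤ c) (hPQ : ∀ A, P A → CoverBy Q A c) :
    CoverBy Q X (b * c) := by
  classical
  obtain ⟨S, hSb, hSX, hSP⟩ := h
  choose! R hRc hRA hRQ using fun A hA ↦ hPQ A (hSP A hA)
  refine ⟨S.biUnion R, ?_, fun x hx ↦ ?_, fun B hB ↦ ?_⟩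
  · calc ((S.biUnion R).card : ℝ) ≤ ∑ A ∈ S, ((R A).card : ℝ) :=
          mod_cast Finset.card_biUnion_le
      _ ≤ S.card • c := Finset.sum_le_card_nsmul _ _ _ hRc
      _ ≤ b * c := by rw [nsmul_eq_mul]; gcongr
  · obtain ⟨A, hA, hxA⟩ := hSX x hx
    obtain ⟨B, hB, hxB⟩ := hRA A hA x hxA
    exact ⟨B, Finset.mem_biUnion.2 ⟨A, hA, hB⟩, hxB⟩
  · obtain ⟨A, hA, hBA⟩ := Finset.mem_biUnion.1 hB
    exact hRQ A hA B hBA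

lemma exists_fin_cover (h : CoverBy (rdiam ρ · < ε) X b) :
    ∃ n : ℕ, (n : ℝ) ≤ b ∧
      ∃ U : Fin n → Set M, X ⊆ (⋃ i, U i) ∧ ∀ i, rdiam ρ (U i) < ε := by
  obtain ⟨S, hSb, hSX, hSε⟩ := h
  refine ⟨S.card, hSb, fun i ↦ S.equivFin.symm i, fun x hx ↦ ?_, fun i ↦
    hSε _ (S.equivFin.symm i).2⟩
  obtain ⟨A, hA, hxA⟩ := hSX x hx
  exact Set.mem_iUnion.2 ⟨S.equivFin ⟨A, hA⟩, by rwa [Equiv.symm_apply_apply]⟩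

lemma covN_le (h : CoverBy (rdiam ρ · < ε) X b) : (covN X ρ ε : ℝ) ≤ b :=
  let ⟨_, hnb, hn⟩ := h.exists_fin_cover
  le_trans (mod_cast Nat.sInf_le hn) hnb

-- `covN X ρ ε` has the junk value `sInf ∅ = 0` if `X` has no finite cover of this kind.
lemma coverBy_covN (h : CoverBy (rdiam ρ · < ε) X b) :
    CoverBy (rdiam ρ · < ε) X (covN X ρ ε) := by
  classical
  obtain ⟨n, -, hn⟩ := h.exists_fin_cover
  obtain ⟨U, hXU, hUε⟩ :
      ∃ U : Fin (covN X ρ ε) → Set M, X ⊆ (⋃ i, U i) ∧ ∀ i, rdiam ρ (U i) < ε :=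
    Nat.sInf_mem (s := {n | ∃ U : Fin n → Set M, X ⊆ (⋃ i, U i) ∧ ∀ i, rdiam ρ (U i) < ε}) ⟨n, hn⟩
  refine ⟨Finset.univ.image U, ?_, fun x hx ↦ ?_,
    Finset.forall_mem_image.2 fun i _ ↦ hUε i⟩
  · exact mod_cast Finset.card_image_le.trans_eq (Finset.card_fin _)
  · obtain ⟨i, hi⟩ := Set.mem_iUnion.1 (hXU hx)
    exact ⟨U i, Finset.mem_image_of_mem U (Finset.mem_univ i), hi⟩

end CoverBy

/-! ### Dynamical smallness over a set of times -/

lemma zpow_apply_zpow_apply {M : Type*} (f : Equiv.Perm M) (i j : ℤ) (x : M) :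
    (f ^ i) ((f ^ j) x) = (f ^ (i + j)) x := by
  rw [zpow_add, Equiv.Perm.mul_apply]

lemma symm_zpow {M : Type*} (f : Equiv.Perm M) (k : ℤ) : f.symm ^ k = f ^ (-k) :=
  (inv_zpow f k).trans (zpow_neg f k).symm

section DynSmall

variable {M : Type*} [PseudoMetricSpace M] {f : Equiv.Perm M} {S T : Set ℤ} {a b : ℤ}
  {c r η ξ : ℝ} {A B X : Set M}

/-- `dist ((f ^ k) x) ((f ^ k) y)`, maximized over the times `k ∈ T`. The distances `dFn`, `dPlusn`
and `dMinusn` are the cases where `T` is a symmetric, a forward or a backward time interval. -/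
noncomputable def dynDist (f : Equiv.Perm M) (T : Set ℤ) (x y : M) : ℝ :=
  sSup {r : ℝ | ∃ k ∈ T, r = dist ((f ^ k) x) ((f ^ k) y)}

/-- `A` has diameter at most `η` for `dynDist f T`. Stating this pointwise avoids the junk values of
suprema. -/
def DynSmall (f : Equiv.Perm M) (T : Set ℤ) (η : ℝ) (A : Set M) : Prop :=
  ∀ p ∈ A, ∀ q ∈ A, ∀ k ∈ T, dist ((f ^ k) p) ((f ^ k) q) ≤ η

/-- `c` is an expansivity constant of `f`. -/
def ExpansiveWith (f : Equiv.Perm M) (c : ℝ) : Prop :=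
  ∀ x y : M, x ≠ y → ∃ n : ℤ, c < dist ((f ^ n) x) ((f ^ n) y)

lemma ExpansiveWith.symm (h : ExpansiveWith f c) : ExpansiveWith f.symm c := fun x y hxy ↦
  let ⟨n, hn⟩ := h x y hxy
  ⟨-n, by rwa [symm_zpow, neg_neg]⟩

lemma continuous_zpow_perm (hf : Continuous f) (hf' : Continuous f.symm) (k : ℤ) :
    Continuous (f ^ k : Equiv.Perm M) := by
  obtain ⟨n, rfl | rfl⟩ := Int.eq_nat_or_neg k
  · rw [zpow_natCast, Equiv.Perm.coe_pow]
    exact hf.iterate n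
  · rw [← symm_zpow, zpow_natCast, Equiv.Perm.coe_pow]
    exact hf'.iterate n

namespace DynSmall

lemma mono (h : DynSmall f T η A) (hST : S ⊆ T) (hηc : η ≤ c) : DynSmall f S c A :=
  fun p hp q hq k hk ↦ (h p hp q hq k (hST hk)).trans hηc

lemma subset (h : DynSmall f T η A) (hBA : B ⊆ A) : DynSmall f T η B :=
  fun p hp q hq ↦ h p (hBA hp) q (hBA hq)

lemma preimage_zpow (h : DynSmall f (Set.Icc a b) η A) (s : ℤ) :
    DynSmall f (Set.Icc (a + s) (b + s)) η ((f ^ s : Equiv.Perm M) ⁻¹' A) := by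
  intro p hp q hq k hk
  simpa only [zpow_apply_zpow_apply, sub_add_cancel] using
    h _ hp _ hq (k - s) ⟨le_sub_right_of_add_le hk.1, sub_le_iff_le_add.2 hk.2⟩

lemma rdiam_le (h : DynSmall f T η A) (hη : 0 ≤ η) : rdiam (dynDist f T) A ≤ η := by
  refine Real.sSup_le ?_ hη
  rintro _ ⟨p, hp, q, hq, rfl⟩
  refine Real.sSup_le ?_ hη
  rintro _ ⟨k, hk, rfl⟩
  exact h p hp q hq k hk

lemma of_rdiam_le [BoundedSpace M] (h : rdiam (dynDist f T) A ≤ η) : DynSmall f T η A := by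
  have hdist (x y : M) : dist x y ≤ Metric.diam (Set.univ : Set M) :=
    Metric.dist_le_diam_of_mem (Bornology.IsBounded.all _) trivial trivial
  intro p hp q hq k hk
  calc dist ((f ^ k) p) ((f ^ k) q) ≤ dynDist f T p q :=
        le_csSup ⟨_, by rintro _ ⟨j, -, rfl⟩; exact hdist _ _⟩ ⟨k, hk, rfl⟩
    _ ≤ rdiam (dynDist f T) A := by
        refine le_csSup ⟨Metric.diam (Set.univ : Set M), ?_⟩ ⟨p, hp, q, hq, rfl⟩
        rintro _ ⟨x, -, y, -, rfl⟩
        refine Real.sSup_le ?_ Metric.diam_nonneg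
        rintro _ ⟨j, -, rfl⟩
        exact hdist _ _
    _ ≤ η := h

end DynSmall

lemma CoverBy.preimage_zpow (h : CoverBy (DynSmall f (Set.Icc a b) η) X r) (s : ℤ) :
    CoverBy (DynSmall f (Set.Icc (a + s) (b + s)) η) ((f ^ s : Equiv.Perm M) ⁻¹' X) r :=
  h.map _ (fun _ hA ↦ hA.preimage_zpow s) fun y hy ↦ ⟨(f ^ s) y, hy, fun _ hA ↦ hA⟩

lemma CoverBy.covN_dynDist_le (h : CoverBy (DynSmall f T η) X r) (hη : 0 ≤ η) (hηξ : η < ξ) :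
    (covN X (dynDist f T) ξ : ℝ) ≤ r :=
  (h.imp fun _ hA ↦ (hA.rdiam_le hη).trans_lt hηξ).covN_le

lemma exists_coverBy_univ [CompactSpace M] (hf : Continuous f) (hf' : Continuous f.symm)
    (hT : T.Finite) (hη : 0 < η) : ∃ r, CoverBy (DynSmall f T η) Set.univ r := by
  classical
  let U (p : M) : Set M := {q | ∀ k ∈ T, dist ((f ^ k) q) ((f ^ k) p) < η / 2}
  have hUopen (p : M) : IsOpen (U p) := by
    simp only [U, Set.ofPred_forall]
    exact hT.isOpen_biInter fun k _ ↦
      isOpen_lt ((continuous_zpow_perm hf hf' k).dist continuous_const) continuous_const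
  have hUsmall (p : M) : DynSmall f T η (U p) := fun q hq q' hq' k hk ↦ by
    linarith [dist_triangle_right ((f ^ k) q) ((f ^ k) q') ((f ^ k) p), hq k hk, hq' k hk]
  obtain ⟨t, ht⟩ := isCompact_univ.elim_finite_subcover U hUopen fun p _ ↦
    Set.mem_iUnion.2 ⟨p, fun k _ ↦ by simpa only [dist_self] using half_pos hη⟩
  refine ⟨_, t.image U, le_rfl, fun x hx ↦ ?_, Finset.forall_mem_image.2 fun p _ ↦ hUsmall p⟩
  obtain ⟨p, hp, hxp⟩ := Set.mem_iUnion₂.1 (ht hx)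
  exact ⟨U p, Finset.mem_image_of_mem U hp, hxp⟩

lemma exists_coverBy_rdiam_lt [CompactSpace M] (hf : Continuous f) (hf' : Continuous f.symm)
    (hT : T.Finite) (hξ : 0 < ξ) (X : Set M) :
    ∃ r, CoverBy (rdiam (dynDist f T) · < ξ) X r := by
  obtain ⟨r, hr⟩ := exists_coverBy_univ hf hf' hT (half_pos hξ)
  exact ⟨r, (hr.subset X.subset_univ).imp fun A hA ↦
    (hA.rdiam_le (half_pos hξ).le).trans_lt (half_lt_self hξ)⟩

lemma coverBy_covN_dynDist [CompactSpace M] (hf : Continuous f) (hf' : Continuous f.symm)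
    (hT : T.Finite) (hξ : 0 < ξ) (X : Set M) :
    CoverBy (DynSmall f T ξ) X (covN X (dynDist f T) ξ) :=
  let ⟨_, hr⟩ := exists_coverBy_rdiam_lt hf hf' hT hξ X
  hr.coverBy_covN.imp fun _ hA ↦ .of_rdiam_le hA.le

lemma covN_dynDist_pos [CompactSpace M] (hf : Continuous f) (hf' : Continuous f.symm)
    (hT : T.Finite) (hξ : 0 < ξ) (hX : X.Nonempty) : (0 : ℝ) < covN X (dynDist f T) ξ :=
  (coverBy_covN_dynDist hf hf' hT hξ X).pos hX

end DynSmall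

/-! ### Uniform expansivity -/

section Expansive

variable {M : Type*} [PseudoMetricSpace M] {f : Equiv.Perm M} {c η ξ : ℝ}

lemma DynSmall.of_endpoints {m : ℕ} {a b : ℤ} {A : Set M}
    (hm : ∀ p q : M,
      (∀ k ∈ Set.Icc (-(m : ℤ)) m, dist ((f ^ k) p) ((f ^ k) q) ≤ c) → dist p q ≤ η)
    (hA : DynSmall f (Set.Icc a b) c A) (ha : DynSmall f (Set.Icc (-m + a) (m + a)) η A)
    (hb : DynSmall f (Set.Icc (-m + b) (m + b)) η A) : DynSmall f (Set.Icc a b) η A := by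
  intro p hp q hq k ⟨hak, hkb⟩
  by_cases hka : k ≤ m + a
  · exact ha p hp q hq k ⟨by omega, hka⟩
  by_cases hbk : -m + b ≤ k
  · exact hb p hp q hq k ⟨hbk, by omega⟩
  refine hm _ _ fun j ⟨hj, hj'⟩ ↦ ?_
  rw [zpow_apply_zpow_apply, zpow_apply_zpow_apply]
  exact hA p hp q hq (j + k) ⟨by omega, by omega⟩

variable [CompactSpace M]

lemma ExpansiveWith.exists_forall_dist_le (hexp : ExpansiveWith f c) (hf : Continuous f)
    (hf' : Continuous f.symm) (hη : 0 < η) :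
    ∃ m : ℕ, ∀ p q : M,
      (∀ k ∈ Set.Icc (-(m : ℤ)) m, dist ((f ^ k) p) ((f ^ k) q) ≤ c) → dist p q ≤ η := by
  let U (m : ℕ) : Set (M × M) :=
    {z | ∃ k ∈ Set.Icc (-(m : ℤ)) m, c < dist ((f ^ k) z.1) ((f ^ k) z.2)}
  have hUopen (m : ℕ) : IsOpen (U m) := by
    simp only [U, Set.ofPred_exists, ← exists_prop]
    refine isOpen_biUnion fun k _ ↦ isOpen_lt continuous_const ?_
    have hk := continuous_zpow_perm hf hf' k
    exact (hk.comp continuous_fst).dist (hk.comp continuous_snd)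
  have hUmono : Monotone U := fun m n hmn z ⟨k, hk, hz⟩ ↦
    ⟨k, Set.Icc_subset_Icc (by omega) (by omega) hk, hz⟩
  have hfar : {z : M × M | η ≤ dist z.1 z.2} ⊆ ⋃ m, U m := fun z hz ↦ by
    have hne : z.1 ≠ z.2 := fun h ↦ (hη.trans_le hz).ne' (by rw [h, dist_self])
    obtain ⟨n, hn⟩ := hexp _ _ hne
    exact Set.mem_iUnion.2 ⟨n.natAbs, n, ⟨by omega, by omega⟩, hn⟩
  obtain ⟨m, hm⟩ := (isClosed_le continuous_const continuous_dist).isCompact.elim_directed_cover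
    U hUopen hfar hUmono.directed_le
  refine ⟨m, fun p q hpq ↦ not_lt.1 fun hlt ↦ ?_⟩
  obtain ⟨k, hk, hck⟩ := @hm (p, q) hlt.le
  exact (hpq k hk).not_gt hck

-- The factor `K` only pays for refining near the two ends of `[a, b]`: at the times in between, the
-- smallness at scale `η` is automatic by uniform expansivity.
lemma ExpansiveWith.exists_coverBy_refine (hexp : ExpansiveWith f c) (hf : Continuous f)
    (hf' : Continuous f.symm) (hη : 0 < η) :
    ∃ K : ℝ, ∀ {a b : ℤ} {X : Set M} {r : ℝ},
      CoverBy (DynSmall f (Set.Icc a b) c) X r →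
        CoverBy (DynSmall f (Set.Icc a b) η) X (K * r) := by
  obtain ⟨m, hm⟩ := hexp.exists_forall_dist_le hf hf' hη
  obtain ⟨κ, hκ⟩ := exists_coverBy_univ hf hf' (Set.finite_Icc (-(m : ℤ)) m) hη
  have hκ₀ : 0 ≤ κ * κ := mul_self_nonneg κ
  refine ⟨κ * κ, fun {a b X r} hX ↦ mul_comm r (κ * κ) ▸ hX.trans hκ₀ fun A hA ↦ ?_⟩
  have hends : CoverBy (fun B ↦ DynSmall f (Set.Icc a b) η (A ∩ B)) A (κ * κ) :=
    ((hκ.preimage_zpow a).subset A.subset_univ).inter ((hκ.preimage_zpow b).subset A.subset_univ)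
      fun B C hB hC ↦ .of_endpoints hm (hA.subset fun _ h ↦ h.1) (hB.subset fun _ h ↦ h.2.1)
        (hC.subset fun _ h ↦ h.2.2)
  exact hends.restrict fun _ hB ↦ hB

lemma ExpansiveWith.exists_covN_dynDist_le (hexp : ExpansiveWith f c) (hf : Continuous f)
    (hf' : Continuous f.symm) (hξ : 0 < ξ) :
    ∃ K : ℝ, ∀ {a b : ℤ} {X : Set M} {r : ℝ}, CoverBy (DynSmall f (Set.Icc a b) c) X r →
      (covN X (dynDist f (Set.Icc a b)) ξ : ℝ) ≤ K * r :=
  let ⟨K, hK⟩ := hexp.exists_coverBy_refine hf hf' (half_pos hξ)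
  ⟨K, fun h ↦ (hK h).covN_dynDist_le (half_pos hξ).le (half_lt_self hξ)⟩

end Expansive

/-! ### Covers along orbits -/

section Orbit

variable {M : Type*} [PseudoMetricSpace M] {f : Equiv.Perm M} {k l : ℤ} {η r : ℝ} {B : Set M}

lemma DynSmall.image_zpow (h : DynSmall f {k} η B) :
    DynSmall f {0} η ((f ^ k : Equiv.Perm M) '' B) := by
  rintro _ ⟨p, hp, rfl⟩ _ ⟨q, hq, rfl⟩ _ rfl
  exact h p hp q hq k rfl

lemma DynSmall.coverBy_concat (hB : DynSmall f (Set.Icc 0 k) η B)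
    (h : CoverBy (DynSmall f (Set.Icc 0 l) η) ((f ^ k : Equiv.Perm M) '' B) r) :
    CoverBy (DynSmall f (Set.Icc 0 (k + l)) η) B r := by
  refine ((h.preimage_zpow k).subset (Set.subset_preimage_image _ _)).restrict ?_
  intro C hC p hp q hq j ⟨hj, hjkl⟩
  rcases le_or_gt j k with hjk | hkj
  · exact hB p hp.1 q hq.1 j ⟨hj, hjk⟩
  · exact hC p hp.2 q hq.2 j ⟨by omega, by omega⟩

/-- Every small set may choose its own time `k`, as long as these times are bounded: restarting at
time `k` propagates the exponential bound to all times. -/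
lemma exists_coverBy_univ_exp [CompactSpace M] (hf : Continuous f) (hf' : Continuous f.symm)
    (hη : 0 < η) {a : ℝ} {N : ℕ}
    (hstep : ∀ A, DynSmall f {0} η A → ∃ k : ℕ, 1 ≤ k ∧ k ≤ N ∧
      CoverBy (DynSmall f (Set.Icc 0 (k : ℤ)) η) A (Real.exp (a * k))) :
    ∃ D : ℝ, ∀ n : ℕ,
      CoverBy (DynSmall f (Set.Icc 0 (n : ℤ)) η) Set.univ (D * Real.exp (a * n)) := by
  choose β hβ using fun n : ℕ ↦ exists_coverBy_univ hf hf' (Set.finite_Icc 0 (n : ℤ)) hη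
  obtain ⟨D, hD⟩ := ((Set.finite_Iio N).image fun n ↦ β n / Real.exp (a * n)).bddAbove
  have hDbase : ∀ n < N, β n ≤ max D 0 * Real.exp (a * n) := fun n hn ↦
    (div_le_iff₀ (Real.exp_pos _)).1 ((hD (Set.mem_image_of_mem _ hn)).trans (le_max_left D 0))
  have hDnonneg (s : ℝ) : 0 ≤ max D 0 * Real.exp s := by positivity
  have hsmall : ∀ n : ℕ, ∀ A, DynSmall f {0} η A →
      CoverBy (DynSmall f (Set.Icc 0 (n : ℤ)) η) A (max D 0 * Real.exp (a * n)) := by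
    intro n
    induction n using Nat.strong_induction_on with
    | _ n ih =>
      intro A hA
      rcases lt_or_ge n N with hnN | hNn
      · exact ((hβ n).subset A.subset_univ).bound_mono (hDbase n hnN)
      obtain ⟨k, hk, hkN, hcov⟩ := hstep A hA
      obtain ⟨l, rfl⟩ := Nat.exists_eq_add_of_le (hkN.trans hNn)
      refine (hcov.trans (hDnonneg (a * l)) fun B hB ↦ ?_).bound_mono (le_of_eq ?_)
      · have hend : DynSmall f {(k : ℤ)} η B :=
          hB.mono (Set.singleton_subset_iff.2 ⟨by omega, le_rfl⟩) le_rfl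
        exact mod_cast hB.coverBy_concat (ih l (by omega) _ hend.image_zpow)
      · rw [mul_left_comm, ← Real.exp_add, Nat.cast_add, mul_add]
  obtain ⟨κ, hκ⟩ := exists_coverBy_univ hf hf' (Set.finite_singleton 0) hη
  exact ⟨κ * max D 0, fun n ↦ by
    simpa only [mul_assoc] using hκ.trans (hDnonneg (a * n)) (hsmall n)⟩

end Orbit

lemma exists_finset_forall_subset_ball {M : Type*} [PseudoMetricSpace M] [CompactSpace M]
    [Nonempty M] {δ : ℝ} (hδ : 0 < δ) :
    ∃ t : Finset M, ∀ A : Set M, (∀ p ∈ A, ∀ q ∈ A, dist p q ≤ δ / 2) →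
      ∃ x ∈ t, A ⊆ Metric.ball x δ := by
  obtain ⟨t, -, ht, hcover⟩ := (isCompact_univ (X := M)).finite_cover_balls (half_pos hδ)
  have hnet (y : M) : ∃ x ∈ ht.toFinset, dist y x < δ / 2 := by
    simpa only [Set.mem_iUnion₂, Metric.mem_ball, exists_prop, ht.mem_toFinset] using
      hcover (Set.mem_univ y)
  refine ⟨ht.toFinset, fun A hA ↦ ?_⟩
  rcases A.eq_empty_or_nonempty with rfl | ⟨p, hp⟩
  · obtain ⟨x, hx, -⟩ := hnet (Classical.arbitrary M)
    exact ⟨x, hx, Set.empty_subset _⟩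
  · obtain ⟨x, hx, hpx⟩ := hnet p
    exact ⟨x, hx, fun q hq ↦ Metric.mem_ball.2 (by linarith [hA q hq p hp, dist_triangle q p x])⟩

/-! ### Growth along local unstable sets -/

section Unstable

variable {M : Type*} [MetricSpace M] {f : Equiv.Perm M} {x : M} {b : ℤ}
  {c r δ ε η ξ E : ℝ}

lemma dFn_eq_dynDist (f : Equiv.Perm M) (n : ℕ) : dFn f n = dynDist f (Set.Icc (-(n : ℤ)) n) := by
  funext x y
  simp only [dFn, dynDist, abs_le, Set.mem_Icc]

lemma dPlusn_eq_dynDist (f : Equiv.Perm M) (n : ℕ) :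
    dPlusn f n = dynDist f (Set.Icc 0 (n : ℤ)) := by
  funext x y
  refine congrArg sSup (Set.ext fun r ↦ ⟨?_, ?_⟩)
  · rintro ⟨k, hk, rfl⟩
    exact ⟨k, ⟨by omega, by omega⟩, by rw [zpow_natCast]⟩
  · rintro ⟨k, ⟨hk₀, hk⟩, rfl⟩
    lift k to ℕ using hk₀
    exact ⟨k, by omega, by rw [zpow_natCast]⟩

lemma dFn_symm (f : Equiv.Perm M) (n : ℕ) : dFn f.symm n = dFn f n := by
  funext x y
  simp only [dFn, symm_zpow]
  exact congrArg sSup (Set.ext fun r ↦ (Equiv.neg ℤ).exists_congr fun k ↦ by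
    simp only [Equiv.neg_apply, abs_neg])

lemma Wu_symm (f : Equiv.Perm M) (ε : ℝ) (x : M) : Wu f.symm ε x = Ws f ε x := rfl

lemma self_mem_Wu (hε : 0 ≤ ε) : x ∈ Wu f ε x := fun n ↦ by rwa [dist_self]

lemma CoverBy.extend_backward_Wu (h : CoverBy (DynSmall f (Set.Icc 0 b) η) (Wu f ε x) r)
    (hη : η ≤ c) (hε : 2 * ε ≤ c) (a : ℤ) :
    CoverBy (DynSmall f (Set.Icc a b) c) (Wu f ε x) r := by
  refine h.restrict fun A hA p hp q hq k hk ↦ ?_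
  rcases le_or_gt 0 k with hk₀ | hk₀
  · exact (hA p hp.2 q hq.2 k ⟨hk₀, hk.2⟩).trans hη
  · obtain ⟨j, rfl⟩ : ∃ j : ℕ, k = -(j : ℤ) := ⟨k.natAbs, by omega⟩
    have hp' := hp.1 j
    have hq' := hq.1 j
    simp only [← symm_zpow, zpow_natCast]
    linarith [dist_triangle_left ((f.symm ^ j) p) ((f.symm ^ j) q) ((f.symm ^ j) x)]

-- Project the ball to the unstable set along stable sets: forward orbits stay `ε`-close.
lemma CoverBy.ball_of_Wu (h : CoverBy (DynSmall f (Set.Icc 0 b) η) (Wu f ε x) r)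
    (hprod : ∀ y, dist y x < δ → (Ws f ε y ∩ Wu f ε x).Nonempty) :
    CoverBy (DynSmall f (Set.Icc 0 b) (η + 2 * ε)) (Metric.ball x δ) r := by
  refine h.map (fun A ↦ {y | ∃ z ∈ A, z ∈ Ws f ε y}) ?_ fun y hy ↦ ?_
  · rintro A hA p ⟨z, hz, hzp⟩ q ⟨w, hw, hwq⟩ k hk
    have hzw := hA z hz w hw k hk
    obtain ⟨j, rfl⟩ := Int.eq_ofNat_of_zero_le hk.1
    rw [zpow_natCast] at hzw ⊢
    linarith [dist_triangle4_right ((f ^ j) p) ((f ^ j) q) ((f ^ j) z) ((f ^ j) w), hzp j, hwq j]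
  · obtain ⟨z, hzs, hzu⟩ := hprod y hy
    exact ⟨z, hzu, fun A hA ↦ ⟨z, hA, hzs⟩⟩

variable [CompactSpace M]

lemma covN_dFn_pos (hf : Continuous f) (hf' : Continuous f.symm) (hξ : 0 < ξ) {X : Set M}
    (hX : X.Nonempty) (n : ℕ) : (0 : ℝ) < covN X (dFn f n) ξ := by
  rw [dFn_eq_dynDist]
  exact covN_dynDist_pos hf hf' (Set.finite_Icc _ _) hξ hX

lemma covN_dPlusn_pos (hf : Continuous f) (hf' : Continuous f.symm) (hξ : 0 < ξ) {X : Set M}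
    (hX : X.Nonempty) (n : ℕ) : (0 : ℝ) < covN X (dPlusn f n) ξ := by
  rw [dPlusn_eq_dynDist]
  exact covN_dynDist_pos hf hf' (Set.finite_Icc _ _) hξ hX

lemma coverBy_covN_dPlusn (hf : Continuous f) (hf' : Continuous f.symm) (hξ : 0 < ξ) (X : Set M)
    (n : ℕ) : CoverBy (DynSmall f (Set.Icc 0 (n : ℤ)) ξ) X (covN X (dPlusn f n) ξ) := by
  rw [dPlusn_eq_dynDist]
  exact coverBy_covN_dynDist hf hf' (Set.finite_Icc _ _) hξ X

namespace ExpansiveWith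

lemma hasGrowthRate_dFn_Wu_iff (hexp : ExpansiveWith f c) (hf : Continuous f)
    (hf' : Continuous f.symm) (hξ : 0 < ξ) (hc : 2 * ξ ≤ c) (x : M) (E : ℝ) :
    HasGrowthRate (fun n ↦ covN (Wu f ξ x) (dFn f n) ξ) E ↔
      HasGrowthRate (fun n ↦ covN (Wu f ξ x) (dPlusn f n) ξ) E := by
  obtain ⟨K, hK⟩ := hexp.exists_covN_dynDist_le hf hf' hξ
  have hne : (Wu f ξ x).Nonempty := ⟨x, self_mem_Wu hξ.le⟩
  have hF := covN_dFn_pos hf hf' hξ hne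
  have hP := covN_dPlusn_pos hf hf' hξ hne
  have hFP (n : ℕ) : (covN (Wu f ξ x) (dFn f n) ξ : ℝ) ≤ K * covN (Wu f ξ x) (dPlusn f n) ξ := by
    rw [dFn_eq_dynDist]
    exact hK ((coverBy_covN_dPlusn hf hf' hξ _ n).extend_backward_Wu (by linarith) hc _)
  have hPF (n : ℕ) : (covN (Wu f ξ x) (dPlusn f n) ξ : ℝ) ≤ K * covN (Wu f ξ x) (dFn f n) ξ := by
    rw [dFn_eq_dynDist, dPlusn_eq_dynDist]
    exact hK ((coverBy_covN_dynDist hf hf' (Set.finite_Icc _ _) hξ _).imp fun A hA ↦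
      hA.mono (Set.Icc_subset_Icc (by omega) le_rfl) (by linarith))
  exact ⟨fun h ↦ h.of_le_mul_of_le_mul hF hP hFP hPF,
    fun h ↦ h.of_le_mul_of_le_mul hP hF hPF hFP⟩

lemma exists_covN_univ_le_of_length_le (hexp : ExpansiveWith f c) (hf : Continuous f)
    (hf' : Continuous f.symm) (hξ : 0 < ξ) (hc : ξ ≤ c) :
    ∃ K : ℝ, ∀ {a b a' b' : ℤ}, b - a ≤ b' - a' →
      (covN Set.univ (dynDist f (Set.Icc a b)) ξ : ℝ) ≤
        K * covN Set.univ (dynDist f (Set.Icc a' b')) ξ := by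
  obtain ⟨K, hK⟩ := hexp.exists_covN_dynDist_le hf hf' hξ
  refine ⟨K, fun {a b a' b'} hlen ↦ hK ?_⟩
  have hcov := coverBy_covN_dynDist hf hf' (Set.finite_Icc a' b') hξ .univ
  exact (hcov.preimage_zpow (a - a')).imp fun A hA ↦
    hA.mono (Set.Icc_subset_Icc (by omega) (by omega)) hc

lemma hasGrowthRate_dPlusn_univ [Nonempty M] (hexp : ExpansiveWith f c) (hf : Continuous f)
    (hf' : Continuous f.symm) (hξ : 0 < ξ) (hc : ξ ≤ c)
    (hE : HasGrowthRate (fun n ↦ covN (Set.univ : Set M) (dFn f n) ξ) E) :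
    HasGrowthRate (fun n ↦ covN (Set.univ : Set M) (dPlusn f n) ξ) (E / 2) := by
  obtain ⟨K, hK⟩ := hexp.exists_covN_univ_le_of_length_le hf hf' hξ hc
  have hF := covN_dFn_pos hf hf' hξ (Set.univ_nonempty (α := M))
  refine (hE.comp_half_add 0).squeeze (K := K) (L := K) (hE.comp_half_add 1) (fun n ↦ hF _)
    (covN_dPlusn_pos hf hf' hξ Set.univ_nonempty) (fun n ↦ hF _) (.of_forall fun n ↦ ?_)
    fun n ↦ ?_
  all_goals
    rw [dFn_eq_dynDist, dPlusn_eq_dynDist]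
    exact hK (by omega)

lemma exists_coverBy_ball (hexp : ExpansiveWith f (3 * ξ)) (hf : Continuous f)
    (hf' : Continuous f.symm) (hξ : 0 < ξ)
    (hprod : ∀ x y, dist x y < δ → (Ws f ξ x ∩ Wu f ξ y).Nonempty) (hη : 0 < η) :
    ∃ K : ℝ, ∀ (x : M) (n : ℕ), CoverBy (DynSmall f (Set.Icc 0 (n : ℤ)) η) (Metric.ball x δ)
      (K * covN (Wu f ξ x) (dPlusn f n) ξ) := by
  obtain ⟨K, hK⟩ := hexp.exists_coverBy_refine hf hf' hη
  refine ⟨K, fun x n ↦ hK ?_⟩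
  have hball := (coverBy_covN_dPlusn hf hf' hξ (Wu f ξ x) n).ball_of_Wu fun y ↦ hprod y x
  exact hball.imp fun A hA ↦ hA.mono subset_rfl (by linarith)

/-- If no point worked, the balls of radius `δ` would all split too slowly over suitable times, and
restarting after each such time would give `M` a growth rate below `h`. -/
lemma exists_exp_le_mul_covN_Wu [Nonempty M] (hexp : ExpansiveWith f (3 * ξ)) (hf : Continuous f)
    (hf' : Continuous f.symm) (hξ : 0 < ξ) (hδ : 0 < δ)
    (hprod : ∀ x y, dist x y < δ → (Ws f ξ x ∩ Wu f ξ y).Nonempty) {h : ℝ}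
    (hh : HasGrowthRate (fun n ↦ covN (Set.univ : Set M) (dPlusn f n) ξ) h) :
    ∃ C : ℝ, ∃ x : M, ∀ n : ℕ, 1 ≤ n →
      Real.exp (h * n) ≤ C * covN (Wu f ξ x) (dPlusn f n) ξ := by
  obtain ⟨η, hη, hηmin⟩ := exists_between (lt_min (half_pos hδ) hξ)
  obtain ⟨K, hK⟩ := hexp.exists_coverBy_ball hf hf' hξ hprod hη
  obtain ⟨t, ht⟩ := exists_finset_forall_subset_ball (M := M) hδ
  refine ⟨Real.exp 1 * K, ?_⟩
  by_contra! hslow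
  choose ν hν hslow using hslow
  obtain ⟨N, hN, hνN⟩ : ∃ N : ℕ, 0 < N ∧ ∀ x ∈ t, ν x ≤ N :=
    ⟨t.sup ν + 1, by omega, fun x hx ↦ (Finset.le_sup hx).trans (Nat.le_succ _)⟩
  have hball : ∀ x ∈ t, K * covN (Wu f ξ x) (dPlusn f (ν x)) ξ ≤
      Real.exp ((h - 1 / N) * ν x) := fun x hx ↦
    le_exp_sub_one_div_mul (hνN x hx) (by rw [← mul_assoc]; exact (hslow x).le)
  obtain ⟨D, hD⟩ := exists_coverBy_univ_exp hf hf' hη (a := h - 1 / N) (N := N) fun A hA ↦ by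
    obtain ⟨x, hx, hAx⟩ := ht A fun p hp q hq ↦
      (hA p hp q hq 0 rfl).trans (hηmin.trans_le (min_le_left _ _)).le
    exact ⟨ν x, hν x, hνN x hx, ((hK x (ν x)).subset hAx).bound_mono (hball x hx)⟩
  have hle : h ≤ h - 1 / N :=
    hh.le_of_le_mul (hasGrowthRate_exp _) (covN_dPlusn_pos hf hf' hξ Set.univ_nonempty)
      (fun n ↦ Real.exp_pos _) fun n ↦ by
        rw [dPlusn_eq_dynDist]
        exact (hD n).covN_dynDist_le hη.le (hηmin.trans_le (min_le_right _ _))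
  exact (sub_lt_self h (by positivity)).not_ge hle

lemma exists_hasGrowthRate_dPlusn_Wu [Nonempty M] (hexp : ExpansiveWith f (3 * ξ))
    (hf : Continuous f) (hf' : Continuous f.symm) (hξ : 0 < ξ) (hδ : 0 < δ)
    (hprod : ∀ x y, dist x y < δ → (Ws f ξ x ∩ Wu f ξ y).Nonempty) {h : ℝ}
    (hh : HasGrowthRate (fun n ↦ covN (Set.univ : Set M) (dPlusn f n) ξ) h) :
    ∃ x, HasGrowthRate (fun n ↦ covN (Wu f ξ x) (dPlusn f n) ξ) h := by
  obtain ⟨C, x, hx⟩ := hexp.exists_exp_le_mul_covN_Wu hf hf' hξ hδ hprod hh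
  obtain ⟨K, hK⟩ := hexp.exists_covN_dynDist_le hf hf' hξ
  refine ⟨x, (hasGrowthRate_exp h).squeeze (L := K) hh (fun n ↦ Real.exp_pos _)
    (covN_dPlusn_pos hf hf' hξ ⟨x, self_mem_Wu hξ.le⟩)
    (covN_dPlusn_pos hf hf' hξ Set.univ_nonempty)
    ((eventually_ge_atTop 1).mono hx) fun n ↦ ?_⟩
  have hcov := (coverBy_covN_dPlusn hf hf' hξ .univ n).subset (Wu f ξ x).subset_univ
  simpa only [← dPlusn_eq_dynDist] using
    hK (hcov.imp fun A hA ↦ hA.mono subset_rfl (by linarith))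

theorem hasGrowthRate_dPlusn_Wu (hexp : ExpansiveWith f (3 * ξ)) (hf : Continuous f)
    (hf' : Continuous f.symm) (hξ : 0 < ξ) (hδ : 0 < δ)
    (hprod : ∀ x y, dist x y < δ → (Ws f ξ x ∩ Wu f ξ y).Nonempty)
    (hhom : ∀ x y E, HasGrowthRate (fun n ↦ covN (Wu f ξ x) (dFn f n) ξ) E →
      HasGrowthRate (fun n ↦ covN (Wu f ξ y) (dFn f n) ξ) E)
    (hE : HasGrowthRate (fun n ↦ covN (Set.univ : Set M) (dFn f n) ξ) E) (y : M) :
    HasGrowthRate (fun n ↦ covN (Wu f ξ y) (dPlusn f n) ξ) (E / 2) := by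
  have : Nonempty M := ⟨y⟩
  have hM := hexp.hasGrowthRate_dPlusn_univ hf hf' hξ (by linarith) hE
  obtain ⟨x, hx⟩ := hexp.exists_hasGrowthRate_dPlusn_Wu hf hf' hξ hδ hprod hM
  have hiff := hexp.hasGrowthRate_dFn_Wu_iff hf hf' hξ (by linarith)
  exact (hiff y _).1 (hhom x y _ ((hiff x _).2 hx))

end ExpansiveWith

end Unstable

theorem stmt_15_general {M : Type*} [MetricSpace M] [CompactSpace M] {f : Equiv.Perm M}
    (hf : Continuous f) (hf' : Continuous f.symm) {ξ δ E : ℝ} (hξ : 0 < ξ)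
    (hexp : ExpansiveWith f (3 * ξ)) (hδ : 0 < δ)
    (hprod : ∀ x y : M, dist x y < δ → (Ws f ξ x ∩ Wu f ξ y).Nonempty)
    (hhomu : ∀ x y E, HasGrowthRate (fun n ↦ covN (Wu f ξ x) (dFn f n) ξ) E →
      HasGrowthRate (fun n ↦ covN (Wu f ξ y) (dFn f n) ξ) E)
    (hhoms : ∀ x y E, HasGrowthRate (fun n ↦ covN (Ws f ξ x) (dFn f n) ξ) E →
      HasGrowthRate (fun n ↦ covN (Ws f ξ y) (dFn f n) ξ) E)
    (hE : HasGrowthRate (fun n ↦ covN (Set.univ : Set M) (dFn f n) ξ) E) (x : M) :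
    HasGrowthRate (fun n ↦ covN (Wu f ξ x) (dPlusn f n) ξ) (E / 2) ∧
      HasGrowthRate (fun n ↦ covN (Ws f ξ x) (dMinusn f n) ξ) (E / 2) := by
  refine ⟨hexp.hasGrowthRate_dPlusn_Wu hf hf' hξ hδ hprod hhomu hE x, ?_⟩
  -- Definitionally, `Ws f` is `Wu f.symm` and `dMinusn f` is `dPlusn f.symm`.
  refine hexp.symm.hasGrowthRate_dPlusn_Wu hf' hf hξ hδ (fun y z hyz ↦ ?_) ?_ ?_ x
  · rw [Set.inter_comm]
    exact hprod z y (dist_comm y z ▸ hyz)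
  · simpa only [dFn_symm, Wu_symm] using hhoms
  · simpa only [dFn_symm] using hE

theorem stmt_15 {M : Type*} [MetricSpace M] [CompactSpace M]
    (f : Equiv.Perm M) (hf : Continuous f) (hf' : Continuous f.symm)
    (ξ lam : ℝ) (hξ : 0 < ξ) (hlam : 1 < lam)
    (hexp : ∀ x y : M, x ≠ y → ∃ n : ℤ, 3 * ξ < dist ((f ^ n) x) ((f ^ n) y))
    (hss : ∀ p q : M, dist p q ≤ ξ →
      max (dist (f p) (f q)) (dist (f.symm p) (f.symm q)) = lam * dist p q)
    (hcc : ∀ ε > (0 : ℝ), ∃ δ > (0 : ℝ), ∀ x y : M, dist x y < δ → (Ws f ε x ∩ Wu f ε y).Nonempty)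
    (hhom : ∀ x y : M,
      (∀ E : ℝ,
        Tendsto (fun n : ℕ =>
          Real.log ((covN (Wu f ξ x) (dFn f n) ξ : ℕ) : ℝ) / (n : ℝ)) atTop (𝓝 E) ↔
        Tendsto (fun n : ℕ =>
          Real.log ((covN (Wu f ξ y) (dFn f n) ξ : ℕ) : ℝ) / (n : ℝ)) atTop (𝓝 E)) ∧
      (∀ E : ℝ,
        Tendsto (fun n : ℕ =>
          Real.log ((covN (Ws f ξ x) (dFn f n) ξ : ℕ) : ℝ) / (n : ℝ)) atTop (𝓝 E) ↔
        Tendsto (fun n : ℕ =>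
          Real.log ((covN (Ws f ξ y) (dFn f n) ξ : ℕ) : ℝ) / (n : ℝ)) atTop (𝓝 E)))
    (E : ℝ)
    (hE : Tendsto (fun n : ℕ =>
        Real.log ((covN (Set.univ : Set M) (dFn f n) ξ : ℕ) : ℝ) / (n : ℝ)) atTop (𝓝 E)) :
    ∀ x : M,
      Tendsto (fun n : ℕ =>
        Real.log ((covN (Wu f ξ x) (dPlusn f n) ξ : ℕ) : ℝ) / (n : ℝ)) atTop (𝓝 (E / 2)) ∧
      Tendsto (fun n : ℕ =>
        Real.log ((covN (Ws f ξ x) (dMinusn f n) ξ : ℕ) : ℝ) / (n : ℝ)) atTop (𝓝 (E / 2)) :=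
  let ⟨_, hδ, hprod⟩ := hcc ξ hξ
  stmt_15_general hf hf' hξ hexp hδ hprod (fun x y E ↦ ((hhom x y).1 E).1)
    (fun x y E ↦ ((hhom x y).2 E).1) hE
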